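/- arXiv:1503.04886 — 3 statements merged into one kernel-verified Lean document; each statement's English description precedes it below -/
import Mathlib

section
/- Let T be an invertible n×n real matrix with T x = e₁ and T y = e_n (where e₁ and e_n are the first and last standard basis vectors of ℝⁿ), and assume the Gohberg–Semencul identity T⁻¹ = GSF(x,y) holds. Let x̃, ỹ ∈ ℝⁿ with first entry ξ̃₀ of x̃ nonzero, let ε > 0 satisfy ‖x̃ − x‖₁ ≤ ε‖x‖₁ and ‖ỹ − y‖₁ ≤ ε‖y‖₁, and set ε̃ = |1/ξ₀ − 1/ξ̃₀| / |1/ξ₀|, where ξ₀ ≠ 0 is the first entry of x. Then ‖T⁻¹ − GSF(x̃,ỹ)‖₁ / ‖T⁻¹‖₁ ≤ (2/|ξ₀|)·[ε + (ε + (1+ε)ε̃)(1+ε)]·min{‖x‖₁, ‖y‖₁}. -/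
/-!
The first and last columns of `T⁻¹` are `x` and `y`, so `‖T⁻¹‖₁ ≥ max (‖x‖₁, ‖y‖₁)`. On the other
hand each triangular Toeplitz factor of the Gohberg–Semencul expression has 1-norm at most the
ℓ¹ norm of its generating vector, since the entries of a column inside the triangle are
distinct entries of that vector. Both products `L_x R_y` and `L⁰_y R⁰_x` are bilinear in `(x, y)`, so perturbing `x`, `y` and
`1 / ξ₀` one at a time (`matNorm1_prod_pert`) bounds the error of each of the two terms by
`(ε + (ε + (1 + ε) ε̃) (1 + ε)) ‖x‖₁ ‖y‖₁ / |ξ₀|`. Dividing by `max (‖x‖₁, ‖y‖₁)` turns the product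
`‖x‖₁ ‖y‖₁` into the minimum.
-/

open Matrix

noncomputable section

/-- ℓ¹ norm of a vector. -/
def vecNorm1 {n : ℕ} (x : Fin n → ℝ) : ℝ := ∑ i, |x i|

/-- ℓ² norm of a vector. -/
def vecNorm2 {n : ℕ} (x : Fin n → ℝ) : ℝ := Real.sqrt (∑ i, (x i) ^ 2)

/-- Matrix operator norm induced by the ℓ¹ vector norm (max absolute column sum). -/
def matNorm1 {n : ℕ} (M : Matrix (Fin n) (Fin n) ℝ) : ℝ := ⨆ j, ∑ i, |M i j|

/-- Matrix operator norm induced by the ℓ∞ vector norm (max absolute row sum). -/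
def matNormInf {n : ℕ} (M : Matrix (Fin n) (Fin n) ℝ) : ℝ := ⨆ i, ∑ j, |M i j|

/-- Spectral norm: operator norm induced by the ℓ² vector norm. -/
def matNorm2 {n : ℕ} (M : Matrix (Fin n) (Fin n) ℝ) : ℝ :=
  ‖Matrix.toEuclideanCLM (𝕜 := ℝ) M‖

/-- The last index of `Fin n`. -/
def lastIdx (n : ℕ) [NeZero n] : Fin n := ⟨n - 1, by have := Nat.pos_of_neZero n; omega⟩

/-- Lower triangular Toeplitz matrix built from `x`. -/
def Lmat {n : ℕ} (x : Fin n → ℝ) : Matrix (Fin n) (Fin n) ℝ :=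
  Matrix.of fun i j =>
    if (j : ℕ) ≤ i then x ⟨(i : ℕ) - j, lt_of_le_of_lt (Nat.sub_le _ _) i.isLt⟩ else 0

/-- Upper triangular Toeplitz matrix built from `y`. -/
def Rmat {n : ℕ} (y : Fin n → ℝ) : Matrix (Fin n) (Fin n) ℝ :=
  Matrix.of fun i j =>
    if (i : ℕ) ≤ j then y ⟨n - 1 - ((j : ℕ) - i), by have := i.isLt; omega⟩ else 0

/-- Strictly lower triangular Toeplitz matrix built from `y`. -/
def L0mat {n : ℕ} (y : Fin n → ℝ) : Matrix (Fin n) (Fin n) ℝ :=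
  Matrix.of fun i j =>
    if (j : ℕ) < i then y ⟨(i : ℕ) - j - 1, by have := i.isLt; omega⟩ else 0

/-- Strictly upper triangular Toeplitz matrix built from `x`. -/
def R0mat {n : ℕ} (x : Fin n → ℝ) : Matrix (Fin n) (Fin n) ℝ :=
  Matrix.of fun i j =>
    if h : (i : ℕ) < j then x ⟨n - ((j : ℕ) - i), by have := j.isLt; omega⟩ else 0

/-- The Gohberg–Semencul expression. -/
def GSF {n : ℕ} [NeZero n] (x y : Fin n → ℝ) : Matrix (Fin n) (Fin n) ℝ :=
  (x 0)⁻¹ • (Lmat x * Rmat y - L0mat y * R0mat x)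

lemma vecNorm1_nonneg {n : ℕ} (x : Fin n → ℝ) : 0 ≤ vecNorm1 x :=
  Finset.sum_nonneg fun _ _ => abs_nonneg _

lemma vecNorm1_add_le {n : ℕ} (x y : Fin n → ℝ) :
    vecNorm1 (x + y) ≤ vecNorm1 x + vecNorm1 y := by
  unfold vecNorm1
  rw [← Finset.sum_add_distrib]
  exact Finset.sum_le_sum fun i _ => abs_add_le _ _

lemma col_le_matNorm1 {n : ℕ} (M : Matrix (Fin n) (Fin n) ℝ) (j : Fin n) :
    ∑ i, |M i j| ≤ matNorm1 M :=
  le_ciSup (f := fun j => ∑ i, |M i j|) (Set.finite_range _).bddAbove j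

lemma matNorm1_le {n : ℕ} [NeZero n] {M : Matrix (Fin n) (Fin n) ℝ} {C : ℝ}
    (h : ∀ j, ∑ i, |M i j| ≤ C) : matNorm1 M ≤ C :=
  ciSup_le h

lemma matNorm1_nonneg {n : ℕ} [NeZero n] (M : Matrix (Fin n) (Fin n) ℝ) : 0 ≤ matNorm1 M :=
  (Finset.sum_nonneg fun _ _ => abs_nonneg _).trans (col_le_matNorm1 M 0)

lemma matNorm1_add_le {n : ℕ} [NeZero n] (A B : Matrix (Fin n) (Fin n) ℝ) :
    matNorm1 (A + B) ≤ matNorm1 A + matNorm1 B := by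
  refine matNorm1_le fun j => ?_
  refine le_trans ?_ (add_le_add (col_le_matNorm1 A j) (col_le_matNorm1 B j))
  rw [← Finset.sum_add_distrib]
  exact Finset.sum_le_sum fun i _ => abs_add_le _ _

lemma matNorm1_smul_le {n : ℕ} [NeZero n] (c : ℝ) (A : Matrix (Fin n) (Fin n) ℝ) :
    matNorm1 (c • A) ≤ |c| * matNorm1 A := by
  refine matNorm1_le fun j => ?_
  simp only [Matrix.smul_apply, smul_eq_mul, abs_mul, ← Finset.mul_sum]
  exact mul_le_mul_of_nonneg_left (col_le_matNorm1 A j) (abs_nonneg c)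

lemma matNorm1_mul_le {n : ℕ} [NeZero n] (A B : Matrix (Fin n) (Fin n) ℝ) :
    matNorm1 (A * B) ≤ matNorm1 A * matNorm1 B := by
  refine matNorm1_le fun j => ?_
  calc ∑ i, |(A * B) i j| ≤ ∑ i, ∑ k, |A i k| * |B k j| := by
        refine Finset.sum_le_sum fun i _ => ?_
        rw [Matrix.mul_apply]
        refine (Finset.abs_sum_le_sum_abs _ _).trans_eq ?_
        simp only [abs_mul]
    _ = ∑ k, (∑ i, |A i k|) * |B k j| := by
        rw [Finset.sum_comm]
        simp only [Finset.sum_mul]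
    _ ≤ ∑ k, matNorm1 A * |B k j| :=
        Finset.sum_le_sum fun k _ =>
          mul_le_mul_of_nonneg_right (col_le_matNorm1 A k) (abs_nonneg _)
    _ = matNorm1 A * ∑ k, |B k j| := by rw [Finset.mul_sum]
    _ ≤ matNorm1 A * matNorm1 B :=
        mul_le_mul_of_nonneg_left (col_le_matNorm1 B j) (matNorm1_nonneg A)

/-- A family that vanishes off `p` and on `p` lists distinct entries of `x` (the `i`-th one being
the entry with index `φ i`) has ℓ¹ norm at most that of `x`. -/
lemma sum_abs_le_vecNorm1 {n : ℕ} (x g : Fin n → ℝ) (p : Fin n → Prop) [DecidablePred p]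
    (φ : Fin n → ℕ) (hinj : ∀ i j, p i → p j → φ i = φ j → i = j)
    (h0 : ∀ i, ¬ p i → g i = 0) (h1 : ∀ i, p i → ∃ h : φ i < n, g i = x ⟨φ i, h⟩) :
    ∑ i, |g i| ≤ vecNorm1 x := by
  classical
  have hfil : ∑ i, |g i| = ∑ i ∈ Finset.univ.filter p, |g i| := by
    rw [Finset.sum_filter]
    refine Finset.sum_congr rfl fun i _ => ?_
    split_ifs with hp
    · rfl
    · simp [h0 i hp]
  -- extend `|x|` by zero to all of `ℕ`
  let X : ℕ → ℝ := fun k => if h : k < n then |x ⟨k, h⟩| else 0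
  have hX : vecNorm1 x = ∑ k ∈ Finset.range n, X k := by
    rw [Finset.sum_range]
    simp [X, vecNorm1]
  rw [hfil, hX]
  calc ∑ i ∈ Finset.univ.filter p, |g i| = ∑ i ∈ Finset.univ.filter p, X (φ i) := by
        refine Finset.sum_congr rfl fun i hi => ?_
        obtain ⟨h, e⟩ := h1 i (Finset.mem_filter.1 hi).2
        simp [X, h, e]
    _ = ∑ k ∈ (Finset.univ.filter p).image φ, X k := by
        rw [Finset.sum_image]
        intro i hi j hj e
        exact hinj i j (by simpa using hi) (by simpa using hj) e
    _ ≤ ∑ k ∈ Finset.range n, X k := by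
        refine Finset.sum_le_sum_of_subset_of_nonneg ?_ ?_
        · intro k hk
          obtain ⟨i, hi, rfl⟩ := Finset.mem_image.1 hk
          exact Finset.mem_range.2 (h1 i (Finset.mem_filter.1 hi).2).1
        · intro k _ _
          simp only [X]
          split_ifs
          · exact abs_nonneg _
          · exact le_rfl

lemma matNorm1_Lmat_le {n : ℕ} [NeZero n] (x : Fin n → ℝ) : matNorm1 (Lmat x) ≤ vecNorm1 x := by
  refine matNorm1_le fun j => ?_
  refine sum_abs_le_vecNorm1 x _ (fun i => (j : ℕ) ≤ i) (fun i => (i : ℕ) - j) ?_ ?_ ?_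
  · intro a b ha hb e
    ext
    omega
  · intro i hi
    simp only [Lmat, Matrix.of_apply, if_neg hi]
  · intro i hi
    exact ⟨by omega, by simp only [Lmat, Matrix.of_apply, if_pos hi]⟩

lemma matNorm1_Rmat_le {n : ℕ} [NeZero n] (y : Fin n → ℝ) : matNorm1 (Rmat y) ≤ vecNorm1 y := by
  refine matNorm1_le fun j => ?_
  refine sum_abs_le_vecNorm1 y _ (fun i => (i : ℕ) ≤ j) (fun i => n - 1 - ((j : ℕ) - i)) ?_ ?_ ?_
  · intro a b ha hb e
    ext
    omega
  · intro i hi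
    simp only [Rmat, Matrix.of_apply, if_neg hi]
  · intro i hi
    exact ⟨by omega, by simp only [Rmat, Matrix.of_apply, if_pos hi]⟩

lemma matNorm1_L0mat_le {n : ℕ} [NeZero n] (y : Fin n → ℝ) :
    matNorm1 (L0mat y) ≤ vecNorm1 y := by
  refine matNorm1_le fun j => ?_
  refine sum_abs_le_vecNorm1 y _ (fun i => (j : ℕ) < i) (fun i => (i : ℕ) - j - 1) ?_ ?_ ?_
  · intro a b ha hb e
    ext
    omega
  · intro i hi
    simp only [L0mat, Matrix.of_apply, if_neg hi]
  · intro i hi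
    exact ⟨by omega, by simp only [L0mat, Matrix.of_apply, if_pos hi]⟩

lemma matNorm1_R0mat_le {n : ℕ} [NeZero n] (x : Fin n → ℝ) :
    matNorm1 (R0mat x) ≤ vecNorm1 x := by
  refine matNorm1_le fun j => ?_
  refine sum_abs_le_vecNorm1 x _ (fun i => (i : ℕ) < j) (fun i => n - ((j : ℕ) - i)) ?_ ?_ ?_
  · intro a b ha hb e
    ext
    omega
  · intro i hi
    simp only [R0mat, Matrix.of_apply, dif_neg hi]
  · intro i hi
    exact ⟨by omega, by simp only [R0mat, Matrix.of_apply, dif_pos hi]⟩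

lemma Lmat_sub {n : ℕ} (x y : Fin n → ℝ) : Lmat (x - y) = Lmat x - Lmat y := by
  ext i j
  simp only [Lmat, Matrix.of_apply, Matrix.sub_apply, Pi.sub_apply]
  split_ifs <;> simp

lemma Rmat_sub {n : ℕ} (x y : Fin n → ℝ) : Rmat (x - y) = Rmat x - Rmat y := by
  ext i j
  simp only [Rmat, Matrix.of_apply, Matrix.sub_apply, Pi.sub_apply]
  split_ifs <;> simp

lemma L0mat_sub {n : ℕ} (x y : Fin n → ℝ) : L0mat (x - y) = L0mat x - L0mat y := by
  ext i j
  simp only [L0mat, Matrix.of_apply, Matrix.sub_apply, Pi.sub_apply]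
  split_ifs <;> simp

lemma R0mat_sub {n : ℕ} (x y : Fin n → ℝ) : R0mat (x - y) = R0mat x - R0mat y := by
  ext i j
  simp only [R0mat, Matrix.of_apply, Matrix.sub_apply, Pi.sub_apply]
  split_ifs <;> simp

/-- Perturbation of a scaled product `c A B` with relative errors `ε` in both factors (measured
against `a` and `b`) and relative error `δ` in the scalar. -/
lemma matNorm1_prod_pert {n : ℕ} [NeZero n] {A B A' B' : Matrix (Fin n) (Fin n) ℝ}
    {a b c c' ε δ : ℝ} (hε : 0 ≤ ε) (ha : 0 ≤ a)
    (hB : matNorm1 B ≤ b) (hA' : matNorm1 A' ≤ (1 + ε) * a) (hB' : matNorm1 B' ≤ (1 + ε) * b)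
    (hdA : matNorm1 (A' - A) ≤ ε * a) (hdB : matNorm1 (B' - B) ≤ ε * b)
    (hc : |c - c'| = |c| * δ) :
    matNorm1 (c • (A * B) - c' • (A' * B')) ≤
      |c| * (ε + (ε + (1 + ε) * δ) * (1 + ε)) * (a * b) := by
  have e : c • (A * B) - c' • (A' * B') =
      (-c) • ((A' - A) * B) + (-c) • (A' * (B' - B)) + (c - c') • (A' * B') := by
    simp only [Matrix.sub_mul, Matrix.mul_sub, smul_sub, neg_smul, sub_smul]
    abel
  have h1 : matNorm1 ((A' - A) * B) ≤ ε * a * b :=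
    (matNorm1_mul_le _ _).trans (mul_le_mul hdA hB (matNorm1_nonneg _) (by positivity))
  have h2 : matNorm1 (A' * (B' - B)) ≤ (1 + ε) * a * (ε * b) :=
    (matNorm1_mul_le _ _).trans (mul_le_mul hA' hdB (matNorm1_nonneg _) (by positivity))
  have h3 : matNorm1 (A' * B') ≤ (1 + ε) * a * ((1 + ε) * b) :=
    (matNorm1_mul_le _ _).trans (mul_le_mul hA' hB' (matNorm1_nonneg _) (by positivity))
  rw [e]
  calc _ ≤ |-c| * matNorm1 ((A' - A) * B) + |-c| * matNorm1 (A' * (B' - B))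
          + |c - c'| * matNorm1 (A' * B') :=
        (matNorm1_add_le _ _).trans (add_le_add ((matNorm1_add_le _ _).trans
          (add_le_add (matNorm1_smul_le _ _) (matNorm1_smul_le _ _))) (matNorm1_smul_le _ _))
    _ ≤ |-c| * (ε * a * b) + |-c| * ((1 + ε) * a * (ε * b))
          + |c - c'| * ((1 + ε) * a * ((1 + ε) * b)) := by gcongr
    _ = _ := by rw [hc, abs_neg]; ring

/-- A solution `z` of `T z = e_j` is the `j`-th column of `T⁻¹`. -/
lemma vecNorm1_le_matNorm1_inv {n : ℕ} {T : Matrix (Fin n) (Fin n) ℝ} (hT : IsUnit T)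
    {z : Fin n → ℝ} {j : Fin n} (hz : T.mulVec z = Pi.single j 1) :
    vecNorm1 z ≤ matNorm1 T⁻¹ := by
  have hz' : z = T⁻¹.mulVec (Pi.single j 1) := by
    rw [← hz, Matrix.mulVec_mulVec,
      Matrix.nonsing_inv_mul _ ((Matrix.isUnit_iff_isUnit_det _).1 hT), Matrix.one_mulVec]
  have : vecNorm1 z = ∑ i, |T⁻¹ i j| := by
    rw [hz', Matrix.mulVec_single_one]
    rfl
  rw [this]
  exact col_le_matNorm1 _ j

/-- Theorem 3.1, 1-norm relative error bound for the inverse via the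
Gohberg–Semencul formula. -/
theorem gsf_rel_error_norm1 {n : ℕ} [NeZero n] (T : Matrix (Fin n) (Fin n) ℝ)
    (hT : IsUnit T) (x y xt yt : Fin n → ℝ)
    (hTx : T.mulVec x = Pi.single 0 1)
    (hTy : T.mulVec y = Pi.single (lastIdx n) 1)
    (hx : x 0 ≠ 0) (hGSF : T⁻¹ = GSF x y)
    (hxt : xt 0 ≠ 0) (ε : ℝ) (hε : 0 < ε)
    (h1 : vecNorm1 (xt - x) ≤ ε * vecNorm1 x)
    (h2 : vecNorm1 (yt - y) ≤ ε * vecNorm1 y)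
    (εt : ℝ) (hεt : εt = |1 / x 0 - 1 / xt 0| / |1 / x 0|) :
    matNorm1 (T⁻¹ - GSF xt yt) / matNorm1 T⁻¹ ≤
      2 / |x 0| * (ε + (ε + (1 + ε) * εt) * (1 + ε)) *
        min (vecNorm1 x) (vecNorm1 y) := by
  have hx0 : 0 < vecNorm1 x := (abs_pos.2 hx).trans_le
    (Finset.single_le_sum (f := fun i => |x i|) (fun _ _ => abs_nonneg _) (Finset.mem_univ 0))
  have hX := vecNorm1_le_matNorm1_inv hT hTx
  have hY := vecNorm1_le_matNorm1_inv hT hTy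
  have hpos : 0 < matNorm1 T⁻¹ := hx0.trans_le hX
  have hy0 := vecNorm1_nonneg y
  have hxt' : vecNorm1 xt ≤ (1 + ε) * vecNorm1 x := by
    have := vecNorm1_add_le (xt - x) x
    rw [sub_add_cancel] at this
    linarith
  have hyt' : vecNorm1 yt ≤ (1 + ε) * vecNorm1 y := by
    have := vecNorm1_add_le (yt - y) y
    rw [sub_add_cancel] at this
    linarith
  have hc : |(x 0)⁻¹ - (xt 0)⁻¹| = |(x 0)⁻¹| * εt := by
    have : |(x 0)⁻¹| ≠ 0 := abs_ne_zero.2 (inv_ne_zero hx)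
    rw [hεt, one_div, one_div, mul_div_cancel₀ _ this]
  have hεt0 : 0 ≤ εt := by
    rw [hεt]
    positivity
  set K := ε + (ε + (1 + ε) * εt) * (1 + ε) with hK
  have hK0 : 0 ≤ K := by positivity
  have b1 := matNorm1_prod_pert hε.le hx0.le (matNorm1_Rmat_le y)
    ((matNorm1_Lmat_le xt).trans hxt') ((matNorm1_Rmat_le yt).trans hyt')
    (by rw [← Lmat_sub]; exact (matNorm1_Lmat_le _).trans h1)
    (by rw [← Rmat_sub]; exact (matNorm1_Rmat_le _).trans h2) hc
  have b2 := matNorm1_prod_pert hε.le hy0 (matNorm1_R0mat_le x)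
    ((matNorm1_L0mat_le yt).trans hyt') ((matNorm1_R0mat_le xt).trans hxt')
    (by rw [← L0mat_sub]; exact (matNorm1_L0mat_le _).trans h2)
    (by rw [← R0mat_sub]; exact (matNorm1_R0mat_le _).trans h1) hc
  have e : T⁻¹ - GSF xt yt =
      ((x 0)⁻¹ • (Lmat x * Rmat y) - (xt 0)⁻¹ • (Lmat xt * Rmat yt)) +
      (-1 : ℝ) • ((x 0)⁻¹ • (L0mat y * R0mat x) - (xt 0)⁻¹ • (L0mat yt * R0mat xt)) := by
    rw [hGSF, GSF, GSF, smul_sub, smul_sub, neg_one_smul]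
    abel
  have hnum : matNorm1 (T⁻¹ - GSF xt yt) ≤
      2 / |x 0| * K * (vecNorm1 x * vecNorm1 y) := by
    rw [e]
    refine (matNorm1_add_le _ _).trans
      ((add_le_add b1 ((matNorm1_smul_le _ _).trans_eq (by simp) |>.trans b2)).trans_eq ?_)
    rw [abs_inv]
    ring
  rw [div_le_iff₀ hpos]
  refine hnum.trans ?_
  rw [mul_assoc _ (min _ _)]
  refine mul_le_mul_of_nonneg_left ?_ (by positivity)
  rw [← min_mul_max (vecNorm1 x) (vecNorm1 y)]
  exact mul_le_mul_of_nonneg_left (max_le hX hY) (le_min hx0.le hy0)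

end
end

section
/- Let x, y, x̃, ỹ ∈ ℝⁿ with first entries ξ₀ ≠ 0 (of x) and ξ̃₀ ≠ 0 (of x̃), let ε > 0 satisfy ‖x̃ − x‖₁ ≤ ε‖x‖₁ and ‖ỹ − y‖₁ ≤ ε‖y‖₁, and set ε̃ = |1/ξ₀ − 1/ξ̃₀| / |1/ξ₀|. Then the Gohberg–Semencul expressions satisfy the ∞-norm bound ‖GSF(x,y) − GSF(x̃,ỹ)‖_∞ ≤ (2/|ξ₀|)·[ε + (ε + (1+ε)ε̃)(1+ε)]·‖x‖₁·‖y‖₁. -/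
/-!
Write `GSF x y = (x 0)⁻¹ • P(x, y)` with `P` (`gsCore`) bilinear. Each row of the four triangular
Toeplitz factors lists entries of `x` or `y` at distinct positions, so its absolute sum is at most
`‖x‖₁` or `‖y‖₁`; submultiplicativity of the row-sum norm gives `‖P(x, y)‖_∞ ≤ 2 ‖x‖₁ ‖y‖₁`
(`gsCore_row_le`). With `(x̃, ỹ)` the perturbed pair, the bound then follows from the splitting
`GSF x y - GSF x̃ ỹ = ξ₀⁻¹ (P(x, y - ỹ) + P(x - x̃, ỹ)) + (ξ₀⁻¹ - ξ̃₀⁻¹) P(x̃, ỹ)`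
together with `‖x̃‖₁ ≤ (1 + ε) ‖x‖₁`, `‖ỹ‖₁ ≤ (1 + ε) ‖y‖₁` and `|ξ₀⁻¹ - ξ̃₀⁻¹| = ε̃ / |ξ₀|`.
-/

open Matrix

noncomputable section

/-- A vector whose nonzero entries are entries of `x` at pairwise distinct positions `g j` has
ℓ¹ norm at most that of `x`; every row of a triangular Toeplitz matrix is such a vector. -/
lemma sum_abs_le_vecNorm1_s5 {n : ℕ} (x T : Fin n → ℝ) (g : Fin n → ℕ)
    (hT : ∀ j, T j ≠ 0 → ∃ k : Fin n, T j = x k ∧ (k : ℕ) = g j)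
    (hg : ∀ j j', T j ≠ 0 → T j' ≠ 0 → g j = g j' → j = j') :
    ∑ j, |T j| ≤ vecNorm1 x := by
  classical
  have hT' : ∀ j, ∃ k : Fin n, T j ≠ 0 → T j = x k ∧ (k : ℕ) = g j := by
    intro j
    by_cases h : T j = 0
    · exact ⟨j, fun h' => absurd h h'⟩
    · obtain ⟨k, hk⟩ := hT j h
      exact ⟨k, fun _ => hk⟩
  choose f hf using hT'
  have h1 : ∑ j, |T j| = ∑ j with T j ≠ 0, |x (f j)| := by
    rw [Finset.sum_filter]
    refine Finset.sum_congr rfl fun j _ => ?_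
    split_ifs with h
    · rw [(hf j h).1]
    · simp [not_not.mp h]
  have hinj : Set.InjOn f (Finset.univ.filter fun j => T j ≠ 0 : Finset (Fin n)) := by
    intro a ha b hb hab
    have ha' : T a ≠ 0 := by simpa using ha
    have hb' : T b ≠ 0 := by simpa using hb
    exact hg a b ha' hb' (by rw [← (hf a ha').2, ← (hf b hb').2, hab])
  rw [h1, ← Finset.sum_image (f := fun k => |x k|) hinj]
  exact Finset.sum_le_sum_of_subset_of_nonneg (Finset.subset_univ _) fun _ _ _ => abs_nonneg _

lemma Lmat_row_le {n : ℕ} (x : Fin n → ℝ) (i : Fin n) :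
    ∑ j, |Lmat x i j| ≤ vecNorm1 x := by
  have hs : ∀ j, Lmat x i j ≠ 0 → (j : ℕ) ≤ i := fun j h => by
    by_contra h'
    exact h (if_neg h')
  refine sum_abs_le_vecNorm1_s5 x _ (fun j => (i : ℕ) - j) (fun j h => ?_) fun j j' h h' e => ?_
  · exact ⟨⟨(i : ℕ) - j, by omega⟩, by simp only [Lmat, Matrix.of_apply, if_pos (hs j h)], rfl⟩
  · have := hs j h
    have := hs j' h'
    omega

lemma Rmat_row_le {n : ℕ} (y : Fin n → ℝ) (i : Fin n) :
    ∑ j, |Rmat y i j| ≤ vecNorm1 y := by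
  have hs : ∀ j, Rmat y i j ≠ 0 → (i : ℕ) ≤ j := fun j h => by
    by_contra h'
    exact h (if_neg h')
  refine sum_abs_le_vecNorm1_s5 y _ (fun j => n - 1 - ((j : ℕ) - i)) (fun j h => ?_)
    fun j j' h h' e => ?_
  · exact ⟨⟨n - 1 - ((j : ℕ) - i), by omega⟩,
      by simp only [Rmat, Matrix.of_apply, if_pos (hs j h)], rfl⟩
  · have := hs j h
    have := hs j' h'
    omega

lemma L0mat_row_le {n : ℕ} (y : Fin n → ℝ) (i : Fin n) :
    ∑ j, |L0mat y i j| ≤ vecNorm1 y := by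
  have hs : ∀ j, L0mat y i j ≠ 0 → (j : ℕ) < i := fun j h => by
    by_contra h'
    exact h (if_neg h')
  refine sum_abs_le_vecNorm1_s5 y _ (fun j => (i : ℕ) - j - 1) (fun j h => ?_) fun j j' h h' e => ?_
  · exact ⟨⟨(i : ℕ) - j - 1, by omega⟩, by simp only [L0mat, Matrix.of_apply, if_pos (hs j h)], rfl⟩
  · have := hs j h
    have := hs j' h'
    omega

lemma R0mat_row_le {n : ℕ} (x : Fin n → ℝ) (i : Fin n) :
    ∑ j, |R0mat x i j| ≤ vecNorm1 x := by
  have hs : ∀ j, R0mat x i j ≠ 0 → (i : ℕ) < j := fun j h => by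
    by_contra h'
    exact h (dif_neg h')
  refine sum_abs_le_vecNorm1_s5 x _ (fun j => n - ((j : ℕ) - i)) (fun j h => ?_) fun j j' h h' e => ?_
  · have := hs j h
    exact ⟨⟨n - ((j : ℕ) - i), by omega⟩,
      by simp only [R0mat, Matrix.of_apply, dif_pos (hs j h)], rfl⟩
  · have := hs j h
    have := hs j' h'
    omega

lemma row_mul_le {n : ℕ} (A B : Matrix (Fin n) (Fin n) ℝ) {a b : ℝ} (hb : 0 ≤ b) (i : Fin n)
    (hA : ∑ k, |A i k| ≤ a) (hB : ∀ k, ∑ j, |B k j| ≤ b) :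
    ∑ j, |(A * B) i j| ≤ a * b := by
  calc ∑ j, |(A * B) i j| ≤ ∑ j, ∑ k, |A i k| * |B k j| := by
        refine Finset.sum_le_sum fun j _ => ?_
        rw [Matrix.mul_apply]
        simpa only [abs_mul] using Finset.abs_sum_le_sum_abs (fun k => A i k * B k j) Finset.univ
    _ = ∑ k, |A i k| * ∑ j, |B k j| := by
        rw [Finset.sum_comm]
        simp only [Finset.mul_sum]
    _ ≤ ∑ k, |A i k| * b :=
        Finset.sum_le_sum fun k _ => mul_le_mul_of_nonneg_left (hB k) (abs_nonneg _)
    _ = (∑ k, |A i k|) * b := by rw [Finset.sum_mul]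
    _ ≤ a * b := mul_le_mul_of_nonneg_right hA hb

/-- The Gohberg–Semencul expression without its scalar factor `(x 0)⁻¹`; it is bilinear in
`(x, y)`. -/
def gsCore {n : ℕ} (x y : Fin n → ℝ) : Matrix (Fin n) (Fin n) ℝ :=
  Lmat x * Rmat y - L0mat y * R0mat x

lemma gsCore_row_le {n : ℕ} (x y : Fin n → ℝ) (i : Fin n) :
    ∑ j, |gsCore x y i j| ≤ 2 * vecNorm1 x * vecNorm1 y := by
  have h1 := row_mul_le (Lmat x) (Rmat y) (vecNorm1_nonneg y) i (Lmat_row_le x i) (Rmat_row_le y)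
  have h2 := row_mul_le (L0mat y) (R0mat x) (vecNorm1_nonneg x) i (L0mat_row_le y i)
    (R0mat_row_le x)
  calc ∑ j, |gsCore x y i j|
      ≤ ∑ j, (|(Lmat x * Rmat y) i j| + |(L0mat y * R0mat x) i j|) :=
        Finset.sum_le_sum fun j _ => abs_sub _ _
    _ ≤ 2 * vecNorm1 x * vecNorm1 y := by
        rw [Finset.sum_add_distrib]
        linarith

lemma gsCore_sub_left {n : ℕ} (x x' y : Fin n → ℝ) :
    gsCore (x - x') y = gsCore x y - gsCore x' y := by
  have h1 : Lmat (x - x') = Lmat x - Lmat x' := by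
    ext i j
    simp only [Lmat, Matrix.of_apply, Matrix.sub_apply]
    split_ifs <;> simp
  have h2 : R0mat (x - x') = R0mat x - R0mat x' := by
    ext i j
    simp only [R0mat, Matrix.of_apply, Matrix.sub_apply]
    split_ifs <;> simp
  simp only [gsCore, h1, h2, sub_mul, mul_sub]
  abel

lemma gsCore_sub_right {n : ℕ} (x y y' : Fin n → ℝ) :
    gsCore x (y - y') = gsCore x y - gsCore x y' := by
  have h1 : Rmat (y - y') = Rmat y - Rmat y' := by
    ext i j
    simp only [Rmat, Matrix.of_apply, Matrix.sub_apply]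
    split_ifs <;> simp
  have h2 : L0mat (y - y') = L0mat y - L0mat y' := by
    ext i j
    simp only [L0mat, Matrix.of_apply, Matrix.sub_apply]
    split_ifs <;> simp
  simp only [gsCore, h1, h2, sub_mul, mul_sub]
  abel

lemma vecNorm1_sub_comm {n : ℕ} (x x' : Fin n → ℝ) : vecNorm1 (x - x') = vecNorm1 (x' - x) :=
  Finset.sum_congr rfl fun _ _ => abs_sub_comm _ _

lemma vecNorm1_le_of_sub_le {n : ℕ} {x xt : Fin n → ℝ} {ε : ℝ}
    (h : vecNorm1 (xt - x) ≤ ε * vecNorm1 x) : vecNorm1 xt ≤ (1 + ε) * vecNorm1 x := by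
  have h1 : vecNorm1 xt ≤ vecNorm1 (xt - x) + vecNorm1 x := by
    unfold vecNorm1
    rw [← Finset.sum_add_distrib]
    refine Finset.sum_le_sum fun i _ => ?_
    simpa using abs_add_le (xt i - x i) (x i)
  linarith

/-- ∞-norm absolute error bound for the Gohberg–Semencul formula. -/
theorem gsf_abs_error_normInf {n : ℕ} [NeZero n] (x y xt yt : Fin n → ℝ)
    (hx : x 0 ≠ 0) (hxt : xt 0 ≠ 0) (ε : ℝ) (hε : 0 < ε)
    (h1 : vecNorm1 (xt - x) ≤ ε * vecNorm1 x)
    (h2 : vecNorm1 (yt - y) ≤ ε * vecNorm1 y)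
    (εt : ℝ) (hεt : εt = |1 / x 0 - 1 / xt 0| / |1 / x 0|) :
    matNormInf (GSF x y - GSF xt yt) ≤
      2 / |x 0| * (ε + (ε + (1 + ε) * εt) * (1 + ε)) * vecNorm1 x * vecNorm1 y := by
  have hx0 : 0 < |x 0| := abs_pos.mpr hx
  have hεt' : |(x 0)⁻¹ - (xt 0)⁻¹| = |x 0|⁻¹ * εt := by
    rw [hεt, one_div, one_div, abs_inv]
    field_simp
  have hεt0 : 0 ≤ εt := by rw [hεt]; positivity
  have hX := vecNorm1_nonneg x
  have hY := vecNorm1_nonneg y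
  have hXt := vecNorm1_le_of_sub_le h1
  have hYt := vecNorm1_le_of_sub_le h2
  have hXt0 := vecNorm1_nonneg xt
  have hYt0 := vecNorm1_nonneg yt
  rw [vecNorm1_sub_comm] at h1 h2
  have hsplit : GSF x y - GSF xt yt =
      (x 0)⁻¹ • (gsCore x (y - yt) + gsCore (x - xt) yt) +
        ((x 0)⁻¹ - (xt 0)⁻¹) • gsCore xt yt := by
    rw [gsCore_sub_left, gsCore_sub_right]
    change (x 0)⁻¹ • gsCore x y - (xt 0)⁻¹ • gsCore xt yt = _
    module
  refine ciSup_le fun i => ?_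
  have hB1 : ∑ j, |gsCore x (y - yt) i j| ≤ 2 * vecNorm1 x * (ε * vecNorm1 y) :=
    (gsCore_row_le _ _ i).trans (by gcongr)
  have hB2 : ∑ j, |gsCore (x - xt) yt i j| ≤
      2 * (ε * vecNorm1 x) * ((1 + ε) * vecNorm1 y) :=
    (gsCore_row_le _ _ i).trans (by gcongr)
  have hB3 : ∑ j, |gsCore xt yt i j| ≤
      2 * ((1 + ε) * vecNorm1 x) * ((1 + ε) * vecNorm1 y) :=
    (gsCore_row_le _ _ i).trans (by gcongr)
  calc ∑ j, |(GSF x y - GSF xt yt) i j|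
      ≤ ∑ j, (|x 0|⁻¹ * (|gsCore x (y - yt) i j| + |gsCore (x - xt) yt i j|) +
          |x 0|⁻¹ * εt * |gsCore xt yt i j|) := by
        refine Finset.sum_le_sum fun j _ => ?_
        rw [hsplit, Matrix.add_apply, Matrix.smul_apply, Matrix.smul_apply, Matrix.add_apply,
          smul_eq_mul, smul_eq_mul]
        refine (abs_add_le _ _).trans ?_
        rw [abs_mul, abs_mul, hεt', abs_inv]
        gcongr
        exact abs_add_le _ _
    _ = |x 0|⁻¹ * (∑ j, |gsCore x (y - yt) i j| + ∑ j, |gsCore (x - xt) yt i j|) +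
          |x 0|⁻¹ * εt * ∑ j, |gsCore xt yt i j| := by
        rw [Finset.sum_add_distrib, ← Finset.mul_sum, ← Finset.mul_sum, Finset.sum_add_distrib]
    _ ≤ |x 0|⁻¹ * (2 * vecNorm1 x * (ε * vecNorm1 y) +
            2 * (ε * vecNorm1 x) * ((1 + ε) * vecNorm1 y)) +
          |x 0|⁻¹ * εt * (2 * ((1 + ε) * vecNorm1 x) * ((1 + ε) * vecNorm1 y)) := by
        gcongr
    _ = _ := by
        rw [div_eq_mul_inv]
        ring

end
end

section
/- In the setting of the inexact shift-and-invert Arnoldi method with GSF-based inverse (T = I + γA invertible, T x = e₁ⁿ, T y = e_nⁿ, T⁻¹ = GSF(x,y), ξ₀ ≠ 0 the first entry of x, ξ̃₀ ≠ 0 the first entry of x̃, ‖x̃ − x‖₁ ≤ ε‖x‖₁, ‖ỹ − y‖₁ ≤ ε‖y‖₁, ε̃ = |1/ξ₀ − 1/ξ̃₀|/|1/ξ₀|; (I+γA)⁻¹V + F = V H̃ + h̃ v e_mᵀ with H̃ invertible, VᵀV = I_m, the i-th column of F equal to f_i = GSF(x̃,ỹ)·v_i − T⁻¹·v_i for v_i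 the i-th column of V, and G = −(1/γ)(I+γA) F H̃⁻¹ Vᵀ), suppose in addition that tol > 0, that ε + (ε + (1+ε)ε̃)(1+ε) ≤ 3ε, and that for a given u ∈ ℝ^m one has ε·6·√m·‖I+γA‖₂·‖x‖₁·‖y‖₁·‖H̃⁻¹u‖₂ ≤ |γ|·|ξ₀|·tol. Then ‖G V u‖₂ ≤ tol. -/
/-!
With `w = H̃⁻¹ u` and `Vᵀ V = 1`, the residual gap is `G V u = -γ⁻¹ T F w`, where `T = 1 + γ A`.
The columns of `F` are `D vᵢ` with `D = GSF x̃ ỹ - GSF x y`, so `F w = D (V w)`; as `V` is an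
isometry, everything reduces to the spectral norm bound `‖D‖₂ ≤ 6 ε ‖x‖₁ ‖y‖₁ / |ξ₀|`.

A matrix whose absolute row and column sums are all at most `c` has spectral norm at most `c`
(Schur test, `matNorm2_le_of_sums`). Each row and each column of the four triangular Toeplitz
matrices lists some entries of the generating vector without repetition, so these matrices are
bounded in spectral norm by the `ℓ¹` norm of that vector; they also depend linearly on it.
Expanding `a' L' R' - a L R = (a' - a) L' R' + a ((L' - L) R' + L (R' - R))` bounds the
perturbation of each of the two products in the Gohberg–Semencul expression by
`(ε + (ε + (1 + ε) ε̃) (1 + ε)) ‖x‖₁ ‖y‖₁ / |ξ₀| ≤ 3 ε ‖x‖₁ ‖y‖₁ / |ξ₀|`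
(`norm_smul_mul_sub_le`). This gives the bound on `‖D‖₂`, and the hypothesis on `tol` follows
with a factor `√m ≥ 1` to spare.
-/

open Matrix

noncomputable section

lemma vecNorm2_nonneg {n : ℕ} (x : Fin n → ℝ) : 0 ≤ vecNorm2 x := Real.sqrt_nonneg _

lemma matNorm2_nonneg {n : ℕ} (M : Matrix (Fin n) (Fin n) ℝ) : 0 ≤ matNorm2 M := norm_nonneg _

lemma vecNorm2_eq_norm {n : ℕ} (x : Fin n → ℝ) : vecNorm2 x = ‖WithLp.toLp 2 x‖ := by
  simp [vecNorm2, EuclideanSpace.norm_eq]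

lemma vecNorm2_mulVec_le {n : ℕ} (M : Matrix (Fin n) (Fin n) ℝ) (v : Fin n → ℝ) :
    vecNorm2 (M.mulVec v) ≤ matNorm2 M * vecNorm2 v := by
  rw [vecNorm2_eq_norm, vecNorm2_eq_norm, ← Matrix.toEuclideanCLM_toLp]
  exact ContinuousLinearMap.le_opNorm _ _

lemma vecNorm2_smul {n : ℕ} (c : ℝ) (v : Fin n → ℝ) : vecNorm2 (c • v) = |c| * vecNorm2 v := by
  rw [vecNorm2_eq_norm, vecNorm2_eq_norm, WithLp.toLp_smul, norm_smul, Real.norm_eq_abs]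

lemma vecNorm2_mulVec_of_transpose_mul_eq_one {n m : ℕ} (V : Matrix (Fin n) (Fin m) ℝ)
    (hVV : Vᵀ * V = 1) (w : Fin m → ℝ) : vecNorm2 (V.mulVec w) = vecNorm2 w := by
  have key : V.mulVec w ⬝ᵥ V.mulVec w = w ⬝ᵥ w := by
    rw [Matrix.dotProduct_mulVec, Matrix.vecMul_mulVec, hVV, Matrix.vecMul_one]
  simp only [dotProduct, ← pow_two] at key
  rw [vecNorm2, vecNorm2, key]

/-- Schur test: a matrix whose absolute row and column sums are at most `c` has spectral norm
at most `c`. -/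
lemma matNorm2_le_of_sums {n : ℕ} (M : Matrix (Fin n) (Fin n) ℝ) (c : ℝ) (hc : 0 ≤ c)
    (hrow : ∀ i, ∑ j, |M i j| ≤ c) (hcol : ∀ j, ∑ i, |M i j| ≤ c) : matNorm2 M ≤ c := by
  refine ContinuousLinearMap.opNorm_le_bound _ hc fun v => ?_
  obtain ⟨v, rfl⟩ := WithLp.toLp_surjective 2 v
  rw [Matrix.toEuclideanCLM_toLp, ← vecNorm2_eq_norm, ← vecNorm2_eq_norm]
  refine Real.sqrt_le_iff.2 ⟨mul_nonneg hc (vecNorm2_nonneg v), ?_⟩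
  rw [mul_pow, vecNorm2, Real.sq_sqrt (Finset.sum_nonneg fun _ _ => sq_nonneg _)]
  -- Cauchy–Schwarz with weights `|M i j|`
  have hrow' : ∀ i, (M.mulVec v i) ^ 2 ≤ c * ∑ j, |M i j| * v j ^ 2 := fun i => by
    have h0 : ∀ j, 0 ≤ |M i j| * v j ^ 2 := fun j => by positivity
    refine le_trans ?_ (mul_le_mul_of_nonneg_right (hrow i) (Finset.sum_nonneg fun j _ => h0 j))
    refine Finset.sum_sq_le_sum_mul_sum_of_sq_le_mul Finset.univ (fun j _ => abs_nonneg _)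
      (fun j _ => h0 j) fun j _ => le_of_eq ?_
    rw [mul_pow, ← sq_abs (M i j)]
    ring
  calc ∑ i, (M.mulVec v i) ^ 2 ≤ ∑ i, c * ∑ j, |M i j| * v j ^ 2 :=
        Finset.sum_le_sum fun i _ => hrow' i
    _ = c * ∑ j, (∑ i, |M i j|) * v j ^ 2 := by
        rw [← Finset.mul_sum, Finset.sum_comm]
        simp only [Finset.sum_mul]
    _ ≤ c * ∑ j, c * v j ^ 2 := by
        gcongr with j
        exact hcol j
    _ = c ^ 2 * ∑ j, v j ^ 2 := by
        rw [← Finset.mul_sum]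
        ring

/-! ### Triangular Toeplitz matrices -/

/-- A vector listing some entries of `x` without repetition, padded with zeros, has `ℓ¹` norm at
most that of `x`. -/
lemma sum_abs_dite_le {n : ℕ} (x f : Fin n → ℝ) (p : Fin n → Prop) (g : Fin n → Fin n)
    (hp : ∀ i, p i → f i = x (g i)) (hn : ∀ i, ¬ p i → f i = 0)
    (hg : ∀ i j, p i → p j → g i = g j → i = j) : ∑ i, |f i| ≤ vecNorm1 x := by
  classical
  have h1 : ∑ i, |f i| = ∑ i ∈ Finset.univ.filter p, |x (g i)| := by
    rw [Finset.sum_filter]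
    refine Finset.sum_congr rfl fun i _ => ?_
    by_cases h : p i
    · simp [h, hp i h]
    · simp [h, hn i h]
  have hinj : Set.InjOn g (Finset.univ.filter p : Finset (Fin n)) := fun i hi j hj h =>
    hg i j (by simpa using hi) (by simpa using hj) h
  rw [h1, ← Finset.sum_image (f := fun k => |x k|) hinj]
  exact Finset.sum_le_sum_of_subset_of_nonneg (Finset.subset_univ _) fun _ _ _ => abs_nonneg _

-- Indices below are reduced modulo `n` only to make them total; the reduction is trivial on the
-- nonzero triangle.

lemma matNorm2_Lmat_le {n : ℕ} (x : Fin n → ℝ) : matNorm2 (Lmat x) ≤ vecNorm1 x := by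
  refine matNorm2_le_of_sums _ _ (vecNorm1_nonneg _) (fun i => ?_) (fun j => ?_)
  · refine sum_abs_dite_le x _ (fun j => (j : ℕ) ≤ i)
      (fun j => ⟨((i : ℕ) - j) % n, Nat.mod_lt _ i.pos⟩) (fun j h => ?_) (fun j h => ?_)
      (fun j k hj hk h => ?_)
    · simp only [Lmat, Matrix.of_apply, h, if_true]
      congr 2
      rw [Nat.mod_eq_of_lt (by omega)]
    · simp only [Lmat, Matrix.of_apply, h, if_false]
    · simp only [Fin.mk.injEq] at h
      rw [Nat.mod_eq_of_lt (by omega), Nat.mod_eq_of_lt (by omega)] at h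
      exact Fin.ext (by omega)
  · refine sum_abs_dite_le x _ (fun i => (j : ℕ) ≤ i)
      (fun i => ⟨((i : ℕ) - j) % n, Nat.mod_lt _ j.pos⟩) (fun i h => ?_) (fun i h => ?_)
      (fun i k hi hk h => ?_)
    · simp only [Lmat, Matrix.of_apply, h, if_true]
      congr 2
      rw [Nat.mod_eq_of_lt (by omega)]
    · simp only [Lmat, Matrix.of_apply, h, if_false]
    · simp only [Fin.mk.injEq] at h
      rw [Nat.mod_eq_of_lt (by omega), Nat.mod_eq_of_lt (by omega)] at h
      exact Fin.ext (by omega)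

lemma matNorm2_Rmat_le {n : ℕ} (y : Fin n → ℝ) : matNorm2 (Rmat y) ≤ vecNorm1 y := by
  refine matNorm2_le_of_sums _ _ (vecNorm1_nonneg _) (fun i => ?_) (fun j => ?_)
  · refine sum_abs_dite_le y _ (fun j => (i : ℕ) ≤ j)
      (fun j => ⟨(n - 1 - ((j : ℕ) - i)) % n, Nat.mod_lt _ i.pos⟩) (fun j h => ?_) (fun j h => ?_)
      (fun j k hj hk h => ?_)
    · simp only [Rmat, Matrix.of_apply, h, if_true]
      congr 2
      rw [Nat.mod_eq_of_lt (by omega)]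
    · simp only [Rmat, Matrix.of_apply, h, if_false]
    · simp only [Fin.mk.injEq] at h
      rw [Nat.mod_eq_of_lt (by omega), Nat.mod_eq_of_lt (by omega)] at h
      exact Fin.ext (by omega)
  · refine sum_abs_dite_le y _ (fun i => (i : ℕ) ≤ j)
      (fun i => ⟨(n - 1 - ((j : ℕ) - i)) % n, Nat.mod_lt _ j.pos⟩) (fun i h => ?_) (fun i h => ?_)
      (fun i k hi hk h => ?_)
    · simp only [Rmat, Matrix.of_apply, h, if_true]
      congr 2
      rw [Nat.mod_eq_of_lt (by omega)]
    · simp only [Rmat, Matrix.of_apply, h, if_false]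
    · simp only [Fin.mk.injEq] at h
      rw [Nat.mod_eq_of_lt (by omega), Nat.mod_eq_of_lt (by omega)] at h
      exact Fin.ext (by omega)

lemma matNorm2_L0mat_le {n : ℕ} (y : Fin n → ℝ) : matNorm2 (L0mat y) ≤ vecNorm1 y := by
  refine matNorm2_le_of_sums _ _ (vecNorm1_nonneg _) (fun i => ?_) (fun j => ?_)
  · refine sum_abs_dite_le y _ (fun j => (j : ℕ) < i)
      (fun j => ⟨((i : ℕ) - j - 1) % n, Nat.mod_lt _ i.pos⟩) (fun j h => ?_) (fun j h => ?_)
      (fun j k hj hk h => ?_)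
    · simp only [L0mat, Matrix.of_apply, h, if_true]
      congr 2
      rw [Nat.mod_eq_of_lt (by omega)]
    · simp only [L0mat, Matrix.of_apply, h, if_false]
    · simp only [Fin.mk.injEq] at h
      rw [Nat.mod_eq_of_lt (by omega), Nat.mod_eq_of_lt (by omega)] at h
      exact Fin.ext (by omega)
  · refine sum_abs_dite_le y _ (fun i => (j : ℕ) < i)
      (fun i => ⟨((i : ℕ) - j - 1) % n, Nat.mod_lt _ j.pos⟩) (fun i h => ?_) (fun i h => ?_)
      (fun i k hi hk h => ?_)
    · simp only [L0mat, Matrix.of_apply, h, if_true]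
      congr 2
      rw [Nat.mod_eq_of_lt (by omega)]
    · simp only [L0mat, Matrix.of_apply, h, if_false]
    · simp only [Fin.mk.injEq] at h
      rw [Nat.mod_eq_of_lt (by omega), Nat.mod_eq_of_lt (by omega)] at h
      exact Fin.ext (by omega)

lemma matNorm2_R0mat_le {n : ℕ} (x : Fin n → ℝ) : matNorm2 (R0mat x) ≤ vecNorm1 x := by
  refine matNorm2_le_of_sums _ _ (vecNorm1_nonneg _) (fun i => ?_) (fun j => ?_)
  · refine sum_abs_dite_le x _ (fun j => (i : ℕ) < j)
      (fun j => ⟨(n - ((j : ℕ) - i)) % n, Nat.mod_lt _ i.pos⟩) (fun j h => ?_) (fun j h => ?_)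
      (fun j k hj hk h => ?_)
    · simp only [R0mat, Matrix.of_apply, h, dite_true]
      congr 2
      rw [Nat.mod_eq_of_lt (by omega)]
    · simp only [R0mat, Matrix.of_apply, h, dite_false]
    · simp only [Fin.mk.injEq] at h
      rw [Nat.mod_eq_of_lt (by omega), Nat.mod_eq_of_lt (by omega)] at h
      exact Fin.ext (by omega)
  · refine sum_abs_dite_le x _ (fun i => (i : ℕ) < j)
      (fun i => ⟨(n - ((j : ℕ) - i)) % n, Nat.mod_lt _ j.pos⟩) (fun i h => ?_) (fun i h => ?_)
      (fun i k hi hk h => ?_)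
    · simp only [R0mat, Matrix.of_apply, h, dite_true]
      congr 2
      rw [Nat.mod_eq_of_lt (by omega)]
    · simp only [R0mat, Matrix.of_apply, h, dite_false]
    · simp only [Fin.mk.injEq] at h
      rw [Nat.mod_eq_of_lt (by omega), Nat.mod_eq_of_lt (by omega)] at h
      exact Fin.ext (by omega)

/-! ### Perturbation of the Gohberg–Semencul expression -/

/-- Perturbation of a scaled product `a L R` under relative errors `ε` in `L`, `R` and `εt` in
`a`. -/
lemma norm_smul_mul_sub_le {E : Type*} [NormedRing E] [NormedAlgebra ℝ E] (L L' R R' : E)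
    (a a' X Y ε εt : ℝ) (hε : 0 ≤ ε) (hX : 0 ≤ X) (hL : ‖L‖ ≤ X) (hR : ‖R‖ ≤ Y)
    (hL' : ‖L' - L‖ ≤ ε * X) (hR' : ‖R' - R‖ ≤ ε * Y) (ha : |a' - a| = εt * |a|) :
    ‖a' • (L' * R') - a • (L * R)‖
      ≤ |a| * X * Y * (ε + (ε + (1 + ε) * εt) * (1 + ε)) := by
  have hL'' : ‖L'‖ ≤ (1 + ε) * X := by
    have := norm_add_le (L' - L) L
    rw [sub_add_cancel] at this
    linarith
  have hR'' : ‖R'‖ ≤ (1 + ε) * Y := by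
    have := norm_add_le (R' - R) R
    rw [sub_add_cancel] at this
    linarith
  have e : a' • (L' * R') - a • (L * R)
      = (a' - a) • (L' * R') + a • ((L' - L) * R' + L * (R' - R)) := by
    rw [sub_mul, mul_sub, sub_smul, smul_add, smul_sub, smul_sub]
    abel
  rw [e]
  calc _ ≤ |a' - a| * (‖L'‖ * ‖R'‖) + |a| * (‖L' - L‖ * ‖R'‖ + ‖L‖ * ‖R' - R‖) := by
        refine (norm_add_le _ _).trans (add_le_add ?_ ?_)
        · rw [norm_smul, Real.norm_eq_abs]
          gcongr
          exact norm_mul_le _ _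
        · rw [norm_smul, Real.norm_eq_abs]
          gcongr
          exact (norm_add_le _ _).trans (add_le_add (norm_mul_le _ _) (norm_mul_le _ _))
    _ ≤ |a' - a| * (((1 + ε) * X) * ((1 + ε) * Y))
          + |a| * ((ε * X) * ((1 + ε) * Y) + X * (ε * Y)) := by gcongr
    _ = _ := by
        rw [ha]
        ring

lemma matNorm2_GSF_sub_le {n : ℕ} [NeZero n] (x y xt yt : Fin n → ℝ) (hx : x 0 ≠ 0)
    (ε εt : ℝ) (hε : 0 < ε)
    (h1 : vecNorm1 (xt - x) ≤ ε * vecNorm1 x) (h2 : vecNorm1 (yt - y) ≤ ε * vecNorm1 y)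
    (hεt : εt = |1 / x 0 - 1 / xt 0| / |1 / x 0|)
    (hbr : ε + (ε + (1 + ε) * εt) * (1 + ε) ≤ 3 * ε) :
    matNorm2 (GSF xt yt - GSF x y) ≤ |x 0|⁻¹ * vecNorm1 x * vecNorm1 y * (6 * ε) := by
  let Φ := Matrix.toEuclideanCLM (𝕜 := ℝ) (n := Fin n)
  have ha : |(xt 0)⁻¹ - (x 0)⁻¹| = εt * |(x 0)⁻¹| := by
    have : |(x 0)⁻¹| ≠ 0 := abs_ne_zero.2 (inv_ne_zero hx)
    rw [hεt, one_div, one_div, div_mul_cancel₀ _ this, abs_sub_comm]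
  have hX := vecNorm1_nonneg x
  have hY := vecNorm1_nonneg y
  have b1 := norm_smul_mul_sub_le (Φ (Lmat x)) (Φ (Lmat xt)) (Φ (Rmat y)) (Φ (Rmat yt))
    (x 0)⁻¹ (xt 0)⁻¹ (vecNorm1 x) (vecNorm1 y) ε εt hε.le hX
    (matNorm2_Lmat_le x) (matNorm2_Rmat_le y)
    (by rw [← map_sub, ← Lmat_sub]; exact (matNorm2_Lmat_le _).trans h1)
    (by rw [← map_sub, ← Rmat_sub]; exact (matNorm2_Rmat_le _).trans h2) ha
  have b2 := norm_smul_mul_sub_le (Φ (L0mat y)) (Φ (L0mat yt)) (Φ (R0mat x)) (Φ (R0mat xt))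
    (x 0)⁻¹ (xt 0)⁻¹ (vecNorm1 y) (vecNorm1 x) ε εt hε.le hY
    (matNorm2_L0mat_le y) (matNorm2_R0mat_le x)
    (by rw [← map_sub, ← L0mat_sub]; exact (matNorm2_L0mat_le _).trans h2)
    (by rw [← map_sub, ← R0mat_sub]; exact (matNorm2_R0mat_le _).trans h1) ha
  have e : Φ (GSF xt yt - GSF x y)
      = ((xt 0)⁻¹ • (Φ (Lmat xt) * Φ (Rmat yt)) - (x 0)⁻¹ • (Φ (Lmat x) * Φ (Rmat y)))
        - ((xt 0)⁻¹ • (Φ (L0mat yt) * Φ (R0mat xt)) - (x 0)⁻¹ • (Φ (L0mat y) * Φ (R0mat x))) := by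
    simp only [GSF, map_sub, map_smul, map_mul, smul_sub]
    abel
  have hK : 0 ≤ |(x 0)⁻¹| * vecNorm1 x * vecNorm1 y := by positivity
  have hm := mul_le_mul_of_nonneg_left hbr hK
  change ‖Φ (GSF xt yt - GSF x y)‖ ≤ _
  rw [e, ← abs_inv]
  refine (norm_sub_le _ _).trans ?_
  linarith

/-- Theorem 3.3: a practical stopping criterion — if the Toeplitz systems are
solved accurately enough, the residual gap is at most the prescribed
tolerance. -/
theorem residual_gap_below_tolerance {n m : ℕ} [NeZero n] [NeZero m]
    (A : Matrix (Fin n) (Fin n) ℝ) (γ : ℝ) (hγ : γ ≠ 0)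
    (hA : IsUnit (1 + γ • A))
    (x y xt yt : Fin n → ℝ)
    (hTx : (1 + γ • A).mulVec x = Pi.single 0 1)
    (hTy : (1 + γ • A).mulVec y = Pi.single (lastIdx n) 1)
    (hx : x 0 ≠ 0) (hGSF : (1 + γ • A)⁻¹ = GSF x y)
    (hxt : xt 0 ≠ 0) (ε : ℝ) (hε : 0 < ε)
    (h1 : vecNorm1 (xt - x) ≤ ε * vecNorm1 x)
    (h2 : vecNorm1 (yt - y) ≤ ε * vecNorm1 y)
    (εt : ℝ) (hεt : εt = |1 / x 0 - 1 / xt 0| / |1 / x 0|)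
    (V F : Matrix (Fin n) (Fin m) ℝ) (Ht : Matrix (Fin m) (Fin m) ℝ)
    (hHt : IsUnit Ht) (ht : ℝ) (v : Fin n → ℝ)
    (hVV : Vᵀ * V = 1)
    (hrel : (1 + γ • A)⁻¹ * V + F = V * Ht + ht • vecMulVec v (Pi.single (lastIdx m) 1))
    (hF : ∀ i : Fin m, (fun k => F k i) =
      (GSF xt yt).mulVec (fun j => V j i) - (1 + γ • A)⁻¹.mulVec (fun j => V j i))
    (G : Matrix (Fin n) (Fin n) ℝ)
    (hG : G = -((1 / γ) • ((1 + γ • A) * F * Ht⁻¹ * Vᵀ)))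
    (tol : ℝ) (htol : 0 < tol)
    (hbr : ε + (ε + (1 + ε) * εt) * (1 + ε) ≤ 3 * ε)
    (u : Fin m → ℝ)
    (hsmall : ε * 6 * Real.sqrt m * matNorm2 (1 + γ • A) * vecNorm1 x * vecNorm1 y *
        vecNorm2 (Ht⁻¹.mulVec u) ≤ |γ| * |x 0| * tol) :
    vecNorm2 (G.mulVec (V.mulVec u)) ≤ tol := by
  have hD := matNorm2_GSF_sub_le x y xt yt hx ε εt hε h1 h2 hεt hbr
  set w : Fin m → ℝ := Ht⁻¹.mulVec u with hw
  have hFD : F = (GSF xt yt - GSF x y) * V := by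
    ext k i
    have := congrFun (hF i) k
    rw [hGSF, ← Matrix.sub_mulVec] at this
    exact this
  have hGVu : G.mulVec (V.mulVec u)
      = (-(1 / γ)) • (1 + γ • A).mulVec ((GSF xt yt - GSF x y).mulVec (V.mulVec w)) := by
    rw [hG, ← neg_smul, Matrix.smul_mulVec, Matrix.mulVec_mulVec, Matrix.mul_assoc _ Vᵀ V, hVV,
      Matrix.mul_one, hFD, hw]
    simp only [Matrix.mulVec_mulVec, Matrix.mul_assoc]
  have hγ' : 0 < |γ| := abs_pos.2 hγ
  have hx' : 0 < |x 0| := abs_pos.2 hx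
  have hT := matNorm2_nonneg (1 + γ • A)
  have hX := vecNorm1_nonneg x
  have hY := vecNorm1_nonneg y
  have hW := vecNorm2_nonneg w
  have hm : 1 ≤ Real.sqrt m := by
    rw [Real.one_le_sqrt]
    exact_mod_cast Nat.pos_of_neZero m
  rw [hGVu, vecNorm2_smul, abs_neg, abs_div, abs_one]
  calc 1 / |γ| * vecNorm2 ((1 + γ • A).mulVec ((GSF xt yt - GSF x y).mulVec (V.mulVec w)))
      ≤ 1 / |γ| * (matNorm2 (1 + γ • A) *
          ((|x 0|⁻¹ * vecNorm1 x * vecNorm1 y * (6 * ε)) * vecNorm2 w)) := by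
        gcongr
        refine (vecNorm2_mulVec_le _ _).trans ?_
        gcongr
        refine (vecNorm2_mulVec_le _ _).trans ?_
        rw [vecNorm2_mulVec_of_transpose_mul_eq_one V hVV]
        gcongr
    _ = (ε * 6 * 1 * matNorm2 (1 + γ • A) * vecNorm1 x * vecNorm1 y * vecNorm2 w)
          / (|γ| * |x 0|) := by
        field_simp
    _ ≤ (ε * 6 * Real.sqrt m * matNorm2 (1 + γ • A) * vecNorm1 x * vecNorm1 y * vecNorm2 w)
          / (|γ| * |x 0|) := by gcongr
    _ ≤ tol := by
        rw [div_le_iff₀ (by positivity)]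
        linarith

end
end
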